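/- Suppose γ_i < 1/3 for all i, and set β = max_i γ_i/(1 − γ_i) < 1/2. Let x* ∈ int(Δ_n) be the unique fixed point of F. Then for every initial condition x(0) ∈ Δ̃_n, there exist ε > 0 with 2β − ε < 1 and a finite index s₁ such that the trajectory x(s+1) = F(x(s)) satisfies, for all s ≥ s₁, ‖x* − x(s+1)‖₁ ≤ (2β − ε)·‖x* − x(s)‖₁. -/

import Mathlib

/-!
With `w_i = 1/(1 - x_i)`, the map `F` acts by `w_i ↦ 1 + γ_i w_i / ∑_{j ≠ i} γ_j w_j`
(`inv_one_sub_DF_le`). Since all `w_j ≥ 1`, the new `w_i` is at most `1 + β w_i`, so along a trajectory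
`limsup w_i ≤ 1/(1 - β) < 2`. Once all `w_j ≤ 2`, every coordinate of the next iterate is at least
`γ_j / 2`, so the `w_j` stay above some `1 + c > 1` and the bound on the new
`w_i` improves to `1 + (β / (1 + c)) w_i`. Hence the coordinates of the trajectory are eventually at
most some `b < β` (`eventually_le_of_trajectory`). The same applies to `x*`, being a constant
trajectory.

When `x`, `y`, `F x`, `F y` all have coordinates at most `b ≤ 1/2`, the map contracts by the factor
`2 b` in the 1-norm (`norm1_DF_sub_le`). The mechanism is the exact formula
`F(x)_i - F(y)_i = (α(x)/α(y)) q_i (d_i - ∑ q_j d_j)` with `q = F(y)`, `d_i = (x_i - y_i)/(1 - x_i)`;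
by symmetry one may assume `α(x) ≤ α(y)`, and then the 1-norm is at most
`∑ 2 q_i (1 - q_i) |d_i| ≤ ∑ 2 b |x_i - y_i|`.
-/

open Finset

/-- The DeGroot-Friedkin map: `F(x)_i = α(x) · γ_i/(1 - x_i)` with
`α(x) = (∑_j γ_j/(1 - x_j))⁻¹`. -/
noncomputable def DF {n : ℕ} (γ : Fin n → ℝ) (x : Fin n → ℝ) : Fin n → ℝ :=
  fun i => (∑ j, γ j / (1 - x j))⁻¹ * (γ i / (1 - x i))

/-- The simplex Δₙ. -/
def simplex (n : ℕ) : Set (Fin n → ℝ) := {x | (∀ i, 0 ≤ x i) ∧ ∑ i, x i = 1}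

/-- The interior int(Δₙ) of the simplex. -/
def intSimplex (n : ℕ) : Set (Fin n → ℝ) := {x | (∀ i, 0 < x i) ∧ ∑ i, x i = 1}

/-- The standard basis vector (vertex of the simplex) eᵢ. -/
def vertex {n : ℕ} (i : Fin n) : Fin n → ℝ := fun j => if j = i then 1 else 0

/-- The punctured simplex Δ̃ₙ = Δₙ \ {e₁, …, eₙ}. -/
def punctSimplex (n : ℕ) : Set (Fin n → ℝ) := simplex n \ (⋃ i, {vertex i})

/-- The 1-norm ‖x‖₁ = ∑ i, |x i|. -/
noncomputable def norm1 {n : ℕ} (x : Fin n → ℝ) : ℝ := ∑ i, |x i|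

lemma DF_sum_pos {n : ℕ} (γ : Fin n → ℝ) (hγpos : ∀ i, 0 < γ i) (hγsum : ∑ i, γ i = 1)
    (x : Fin n → ℝ) (hx : ∀ i, x i < 1) : 0 < ∑ j, γ j / (1 - x j) := by
  apply Finset.sum_pos
  · intro j _
    exact div_pos (hγpos j) (sub_pos.2 (hx j))
  · by_contra h
    rw [Finset.not_nonempty_iff_eq_empty] at h
    rw [h] at hγsum
    simp at hγsum

lemma DF_mem_intSimplex {n : ℕ} (γ : Fin n → ℝ) (hγpos : ∀ i, 0 < γ i) (hγsum : ∑ i, γ i = 1)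
    (x : Fin n → ℝ) (hx : ∀ i, x i < 1) : DF γ x ∈ intSimplex n := by
  have hS := DF_sum_pos γ hγpos hγsum x hx
  refine ⟨fun i => mul_pos (inv_pos.2 hS) (div_pos (hγpos i) (sub_pos.2 (hx i))), ?_⟩
  simp only [DF]
  rw [← Finset.mul_sum, inv_mul_cancel₀ hS.ne']

/-- Each coordinate is less than `1` because the other coordinates take a positive share. -/
lemma lt_one_of_mem_intSimplex {n : ℕ} (hn : 3 ≤ n) {x : Fin n → ℝ} (hx : x ∈ intSimplex n)
    (i : Fin n) : x i < 1 := by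
  obtain ⟨hp, hs⟩ := hx
  have : Nontrivial (Fin n) := Fin.nontrivial_iff_two_le.2 (by omega)
  obtain ⟨j, hj⟩ := exists_ne i
  rw [← hs]
  exact Finset.single_lt_sum hj (Finset.mem_univ i) (Finset.mem_univ j) (hp j)
    (fun k _ _ => (hp k).le)

lemma lt_one_of_mem_punctSimplex {n : ℕ} {x : Fin n → ℝ} (hx : x ∈ punctSimplex n)
    (i : Fin n) : x i < 1 := by
  obtain ⟨⟨hp, hs⟩, hv⟩ := hx
  by_contra h
  push Not at h
  apply hv
  rw [Set.mem_iUnion]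
  refine ⟨i, ?_⟩
  have h1 := Finset.add_sum_erase Finset.univ x (Finset.mem_univ i)
  have h2 : 0 ≤ ∑ j ∈ Finset.univ.erase i, x j := Finset.sum_nonneg fun j _ => hp j
  have h3 : ∑ j ∈ Finset.univ.erase i, x j = 0 := by linarith
  rw [Finset.sum_eq_zero_iff_of_nonneg (fun j _ => hp j)] at h3
  rw [Set.mem_singleton_iff]
  funext j
  unfold vertex
  split_ifs with hj
  · rw [hj]; linarith
  · exact h3 j (Finset.mem_erase.2 ⟨hj, Finset.mem_univ j⟩)

/-- One step of `F` in the variables `w_i = 1/(1 - x_i)`: if all `w_j ≥ m` then the new `w_i` is at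
most `1 + κ w_i / m`, for any `κ ≥ γ_i/(1 - γ_i)`. -/
lemma inv_one_sub_DF_le {n : ℕ} (γ : Fin n → ℝ) (hγpos : ∀ i, 0 < γ i)
    (hγsum : ∑ i, γ i = 1) (x : Fin n → ℝ) (hx : ∀ i, x i < 1) (m : ℝ) (hm : 0 < m)
    (hxm : ∀ i, m ≤ (1 - x i)⁻¹) (i : Fin n) (hi : γ i < 1 / 3)
    (κ : ℝ) (hκ : γ i / (1 - γ i) ≤ κ) :
    (1 - DF γ x i)⁻¹ ≤ 1 + κ / m * (1 - x i)⁻¹ := by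
  have h1 := Finset.add_sum_erase Finset.univ (fun j => γ j / (1 - x j)) (Finset.mem_univ i)
  have h2 := Finset.add_sum_erase Finset.univ γ (Finset.mem_univ i)
  have hT : (1 - γ i) * m ≤ ∑ j ∈ Finset.univ.erase i, γ j / (1 - x j) := by
    rw [show 1 - γ i = ∑ j ∈ Finset.univ.erase i, γ j by linarith, Finset.sum_mul]
    exact Finset.sum_le_sum fun j _ => by
      rw [div_eq_mul_inv]; exact mul_le_mul_of_nonneg_left (hxm j) (hγpos j).le
  have hw : 0 < (1 - x i)⁻¹ := inv_pos.2 (sub_pos.2 (hx i))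
  simp only [DF]
  rw [← h1]
  set T := ∑ j ∈ Finset.univ.erase i, γ j / (1 - x j)
  rw [div_eq_mul_inv (γ i)]
  set w := (1 - x i)⁻¹
  have hg := hγpos i
  have hq : 0 < (1 - γ i) * m := mul_pos (by linarith) hm
  have hT0 : 0 < T := lt_of_lt_of_le hq hT
  have hA : 0 < γ i * w := mul_pos hg hw
  have e : (1 - (γ i * w + T)⁻¹ * (γ i * w))⁻¹ = 1 + γ i * w / T := by
    have : 1 - (γ i * w + T)⁻¹ * (γ i * w) = T / (γ i * w + T) := by
      field_simp; ring
    rw [this]; field_simp; ring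
  rw [e]
  have h3 : γ i * w / T ≤ γ i * w / ((1 - γ i) * m) :=
    div_le_div_of_nonneg_left hA.le hq hT
  have h4 : γ i * w / ((1 - γ i) * m) = γ i / (1 - γ i) / m * w := by
    have : (1 - γ i) ≠ 0 := by linarith
    field_simp
  have h5 : γ i / (1 - γ i) / m * w ≤ κ / m * w := by gcongr
  linarith

lemma eventually_le_of_affine_rec (u : ℕ → ℝ) (k L : ℝ) (hk0 : 0 ≤ k) (hk1 : k < 1)
    (hL : (1 - k)⁻¹ < L) (hu : ∀ᶠ s in Filter.atTop, u (s + 1) ≤ 1 + k * u s) :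
    ∀ᶠ s in Filter.atTop, u s ≤ L := by
  obtain ⟨N, hN⟩ := Filter.eventually_atTop.1 hu
  set l := (1 - k)⁻¹ with hl
  have hfix : l = 1 + k * l := by
    have : (1 - k) ≠ 0 := by linarith
    rw [hl]; field_simp; ring
  have key : ∀ m, u (N + m) ≤ l + k ^ m * (u N - l) := by
    intro m
    induction m with
    | zero => simp
    | succ m ih =>
      have h1 := hN (N + m) (by omega)
      have h2 := mul_le_mul_of_nonneg_left ih hk0
      rw [← add_assoc, pow_succ]
      linarith
  have ht : Filter.Tendsto (fun m : ℕ => l + k ^ m * (u N - l)) Filter.atTop (nhds l) := by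
    simpa using ((tendsto_pow_atTop_nhds_zero_of_lt_one hk0 hk1).mul_const (u N - l)).const_add l
  obtain ⟨M, hM⟩ := Filter.eventually_atTop.1 (ht.eventually_lt_const hL)
  refine Filter.eventually_atTop.2 ⟨N + M, fun s hs => ?_⟩
  obtain ⟨m, rfl⟩ := Nat.exists_eq_add_of_le (show N ≤ s by omega)
  exact (key m).trans (hM m (by omega)).le

/-- There is a bound `b < β`, independent of the trajectory, that every trajectory starting with
all coordinates below `1` eventually obeys in each coordinate. -/
lemma eventually_le_of_trajectory {n : ℕ} (hn : 3 ≤ n) (γ : Fin n → ℝ)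
    (hγpos : ∀ i, 0 < γ i) (hγsum : ∑ i, γ i = 1) (hγthird : ∀ i, γ i < 1 / 3)
    (β : ℝ) (hβ0 : 0 < β) (hβ2 : β < 1 / 2) (hβ : ∀ i, γ i / (1 - γ i) ≤ β) :
    ∃ b, 0 < b ∧ b < β ∧ ∀ x : ℕ → Fin n → ℝ, (∀ i, x 0 i < 1) →
      (∀ s, x (s + 1) = DF γ (x s)) → ∀ᶠ s in Filter.atTop, ∀ i, x s i ≤ b := by
  have : Nonempty (Fin n) := ⟨⟨0, by omega⟩⟩
  obtain ⟨i₀, hi₀⟩ := Finite.exists_min γ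
  set c := γ i₀ / 2 with hc
  have hc0 : 0 < c := half_pos (hγpos i₀)
  have hβ' : β / (1 + c) < β := by
    rw [div_lt_iff₀ (by linarith)]; nlinarith
  have hβ'0 : 0 < β / (1 + c) := by positivity
  refine ⟨(β / (1 + c) + β) / 2, by linarith, by linarith, fun x hx0 hx => ?_⟩
  set b := (β / (1 + c) + β) / 2 with hb
  have hlt : ∀ s i, x s i < 1 := by
    intro s
    induction s with
    | zero => exact hx0
    | succ s ih =>
      rw [hx s]
      exact lt_one_of_mem_intSimplex hn (DF_mem_intSimplex γ hγpos hγsum _ ih)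
  have hpos : ∀ s i, 0 < x (s + 1) i := fun s i => by
    rw [hx s]; exact (DF_mem_intSimplex γ hγpos hγsum _ (hlt s)).1 i
  -- The first pass uses only `w_j ≥ 1`, valid from time `1` on.
  have hw2 : ∀ᶠ s in Filter.atTop, ∀ i, (1 - x s i)⁻¹ ≤ 2 := by
    rw [Filter.eventually_all]
    intro i
    refine eventually_le_of_affine_rec (fun s => (1 - x s i)⁻¹) β 2 hβ0.le (by linarith) ?_ ?_
    · rw [inv_lt_comm₀ (by linarith) (by norm_num)]; linarith
    · filter_upwards [Filter.eventually_ge_atTop 1] with s hs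
      obtain ⟨t, rfl⟩ := Nat.exists_eq_add_of_le' hs
      have h := inv_one_sub_DF_le γ hγpos hγsum (x (t + 1)) (hlt _) 1 one_pos
        (fun j => (one_le_inv₀ (sub_pos.2 (hlt _ j))).2 (by linarith [hpos t j]))
        i (hγthird i) β (hβ i)
      rw [div_one, ← hx] at h
      exact h
  have hlow : ∀ᶠ s in Filter.atTop, ∀ i, 1 + c ≤ (1 - x s i)⁻¹ := by
    have h : ∀ᶠ s in Filter.atTop, ∀ i, 1 + c ≤ (1 - x (s + 1) i)⁻¹ := by
      filter_upwards [hw2, Filter.eventually_ge_atTop 1] with s hs hs1 i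
      have hS := DF_sum_pos γ hγpos hγsum (x s) (hlt s)
      have hS2 : ∑ j, γ j / (1 - x s j) ≤ 2 := by
        calc ∑ j, γ j / (1 - x s j) ≤ ∑ j, γ j * 2 := Finset.sum_le_sum fun j _ => by
              rw [div_eq_mul_inv]; exact mul_le_mul_of_nonneg_left (hs j) (hγpos j).le
          _ = 2 := by rw [← Finset.sum_mul, hγsum, one_mul]
      obtain ⟨t, rfl⟩ := Nat.exists_eq_add_of_le' hs1
      have hci : c ≤ x (t + 1 + 1) i := by
        rw [hx (t + 1)]
        simp only [DF]
        have h1 : γ i ≤ γ i / (1 - x (t + 1) i) := by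
          rw [le_div_iff₀ (sub_pos.2 (hlt _ i))]
          nlinarith [hγpos i, hpos t i]
        have h2 : (2 : ℝ)⁻¹ ≤ (∑ j, γ j / (1 - x (t + 1) j))⁻¹ := inv_anti₀ hS hS2
        calc c ≤ 2⁻¹ * γ i := by rw [hc]; linarith [hi₀ i]
          _ ≤ _ := mul_le_mul h2 h1 (hγpos i).le (inv_pos.2 hS).le
      have h1 := sub_pos.2 (hlt (t + 1 + 1) i)
      rw [le_inv_comm₀ (by linarith) h1, ← one_div, le_div_iff₀ (by linarith)]
      nlinarith
    exact (Filter.eventually_atTop.1 h).elim fun N hN =>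
      Filter.eventually_atTop.2 ⟨N + 1, fun s hs => by
        obtain ⟨t, rfl⟩ := Nat.exists_eq_add_of_le' (show 1 ≤ s by omega)
        exact hN t (by omega)⟩
  rw [Filter.eventually_all]
  intro i
  have hfin := eventually_le_of_affine_rec (fun s => (1 - x s i)⁻¹) (β / (1 + c)) (1 - b)⁻¹
    hβ'0.le (by linarith)
    (by rw [inv_lt_inv₀ (by linarith) (by linarith)]; linarith)
    (by
      filter_upwards [hlow] with s hs
      have h := inv_one_sub_DF_le γ hγpos hγsum (x s) (hlt _) (1 + c) (by linarith) hs
        i (hγthird i) β (hβ i)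
      rw [← hx] at h
      exact h)
  filter_upwards [hfin] with s hs
  rw [inv_le_inv₀ (sub_pos.2 (hlt s i)) (by linarith)] at hs
  linarith

/-- The case `α(x) ≤ α(y)` of the contraction estimate, in which the prefactor `α(x)/α(y)` can be
dropped. -/
lemma norm1_DF_sub_le_of_le {n : ℕ} (γ : Fin n → ℝ) (hγpos : ∀ i, 0 < γ i)
    (hγsum : ∑ i, γ i = 1) (b : ℝ) (hb : b ≤ 1 / 2)
    (x y : Fin n → ℝ) (hx : ∀ i, x i ≤ b) (hy : ∀ i, y i ≤ b) (hFy : ∀ i, DF γ y i ≤ b)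
    (hle : ∑ j, γ j / (1 - y j) ≤ ∑ j, γ j / (1 - x j)) :
    norm1 (DF γ x - DF γ y) ≤ 2 * b * norm1 (x - y) := by
  have hx1 : ∀ i, 0 < 1 - x i := fun i => by linarith [hx i]
  have hy1 : ∀ i, 0 < 1 - y i := fun i => by linarith [hy i]
  have hSx := DF_sum_pos γ hγpos hγsum x fun i => sub_pos.1 (hx1 i)
  have hSy := DF_sum_pos γ hγpos hγsum y fun i => sub_pos.1 (hy1 i)
  obtain ⟨hq0, hq1⟩ := DF_mem_intSimplex γ hγpos hγsum y fun i => sub_pos.1 (hy1 i)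
  have hpd : ∀ i, DF γ x i = (∑ j, γ j / (1 - x j))⁻¹ * (γ i / (1 - x i)) := fun i => rfl
  have hqd : ∀ i, DF γ y i = (∑ j, γ j / (1 - y j))⁻¹ * (γ i / (1 - y i)) := fun i => rfl
  set p := DF γ x
  set q := DF γ y
  set S := ∑ j, γ j / (1 - x j) with hSdef
  set T := ∑ j, γ j / (1 - y j) with hTdef
  set d : Fin n → ℝ := fun i => (x i - y i) / (1 - x i) with hd
  set D := ∑ j, q j * d j with hD
  have hg : ∀ i, γ i / (1 - x i) = T * (q i * (1 + d i)) := fun i => by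
    have h1 := (hx1 i).ne'
    have h2 := (hy1 i).ne'
    have h3 := hSy.ne'
    rw [hqd]
    simp only [hd]
    field_simp
    ring
  have hS : S = T * (1 + D) := by
    rw [hSdef, Finset.sum_congr rfl fun i _ => hg i, ← Finset.mul_sum]
    simp only [mul_add, mul_one, Finset.sum_add_distrib, hq1, hD]
  have hdiff : ∀ i, p i - q i = T / S * (q i * (d i - D)) := fun i => by
    rw [hpd, hg]
    have h3 := hSx.ne'
    field_simp
    rw [hS]; ring
  have habs : ∀ i, |p i - q i| ≤
      q i * ((1 - 2 * q i) * |d i| + ∑ j, q j * |d j|) := fun i => by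
    rw [hdiff, abs_mul, abs_mul, abs_of_pos (hq0 i), abs_of_pos (div_pos hSy hSx)]
    have h1 : T / S ≤ 1 := (div_le_one hSx).2 hle
    have h2 : |d i - D| ≤ (1 - 2 * q i) * |d i| + ∑ j, q j * |d j| := by
      have e1 := Finset.add_sum_erase Finset.univ (fun j => q j * d j) (Finset.mem_univ i)
      have e2 := Finset.add_sum_erase Finset.univ (fun j => q j * |d j|) (Finset.mem_univ i)
      have e3 : |∑ j ∈ Finset.univ.erase i, q j * d j| ≤
          ∑ j ∈ Finset.univ.erase i, q j * |d j| := by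
        refine (Finset.abs_sum_le_sum_abs _ _).trans (Finset.sum_le_sum fun j _ => ?_)
        rw [abs_mul, abs_of_pos (hq0 j)]
      have hqi : 0 ≤ 1 - q i := by linarith [hFy i]
      have e4 : d i - D = (1 - q i) * d i - ∑ j ∈ Finset.univ.erase i, q j * d j := by
        rw [hD, ← e1]; ring
      rw [e4, ← e2]
      refine (abs_sub _ _).trans ?_
      rw [abs_mul, abs_of_nonneg hqi]
      linarith
    have h3 : 0 ≤ q i * |d i - D| := mul_nonneg (hq0 i).le (abs_nonneg _)
    calc T / S * (q i * |d i - D|) ≤ q i * |d i - D| := mul_le_of_le_one_left h3 h1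
      _ ≤ _ := mul_le_mul_of_nonneg_left h2 (hq0 i).le
  have hterm : ∀ i, 2 * (q i * (1 - q i) * |d i|) ≤ 2 * b * |x i - y i| := fun i => by
    -- `t (1 - t)` is increasing on `[0, 1/2]`.
    have h1 : q i * (1 - q i) ≤ b * (1 - b) := by nlinarith [hFy i]
    have h2 : (1 - b) * |d i| ≤ |x i - y i| := by
      have : |x i - y i| = (1 - x i) * |d i| := by
        simp only [hd]
        rw [abs_div, abs_of_pos (hx1 i)]
        field_simp [(hx1 i).ne']
      rw [this]
      exact mul_le_mul_of_nonneg_right (by linarith [hx i]) (abs_nonneg _)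
    have h3 := mul_le_mul_of_nonneg_right h1 (abs_nonneg (d i))
    have h4 := mul_le_mul_of_nonneg_left h2 ((hq0 i).le.trans (hFy i))
    linarith
  simp only [norm1, Pi.sub_apply]
  calc ∑ i, |p i - q i| ≤ ∑ i, q i * ((1 - 2 * q i) * |d i| + ∑ j, q j * |d j|) :=
        Finset.sum_le_sum fun i _ => habs i
    _ = ∑ i, 2 * (q i * (1 - q i) * |d i|) := by
        have : ∀ E : ℝ, ∑ i, q i * ((1 - 2 * q i) * |d i| + E) =
            ∑ i, q i * (1 - 2 * q i) * |d i| + E := fun E => by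
          simp only [mul_add, Finset.sum_add_distrib, ← Finset.sum_mul, hq1, one_mul, mul_assoc]
        rw [this, ← Finset.sum_add_distrib]
        exact Finset.sum_congr rfl fun i _ => by ring
    _ ≤ ∑ i, 2 * b * |x i - y i| := Finset.sum_le_sum fun i _ => hterm i
    _ = 2 * b * ∑ i, |x i - y i| := by rw [← Finset.mul_sum]

lemma norm1_sub_comm {n : ℕ} (x y : Fin n → ℝ) : norm1 (x - y) = norm1 (y - x) := by
  simp only [norm1, Pi.sub_apply]
  exact Finset.sum_congr rfl fun i _ => abs_sub_comm _ _

lemma norm1_DF_sub_le {n : ℕ} (γ : Fin n → ℝ) (hγpos : ∀ i, 0 < γ i)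
    (hγsum : ∑ i, γ i = 1) (b : ℝ) (hb : b ≤ 1 / 2)
    (x y : Fin n → ℝ) (hx : ∀ i, x i ≤ b) (hy : ∀ i, y i ≤ b)
    (hFx : ∀ i, DF γ x i ≤ b) (hFy : ∀ i, DF γ y i ≤ b) :
    norm1 (DF γ x - DF γ y) ≤ 2 * b * norm1 (x - y) := by
  rcases le_total (∑ j, γ j / (1 - y j)) (∑ j, γ j / (1 - x j)) with h | h
  · exact norm1_DF_sub_le_of_le γ hγpos hγsum b hb x y hx hy hFy h
  · rw [norm1_sub_comm, norm1_sub_comm x]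
    exact norm1_DF_sub_le_of_le γ hγpos hγsum b hb y x hy hx hFx h

/-- suppose γ_i < 1/3 for all i and β = max_i γ_i/(1 − γ_i) (< 1/2).
Let x* ∈ int(Δₙ) be the unique fixed point of F. Then for every trajectory
x(s+1) = F(x(s)) with x(0) ∈ Δ̃ₙ there exist ε > 0 with 2β − ε < 1 and a finite
s₁ such that ‖x* − x(s+1)‖₁ ≤ (2β − ε)·‖x* − x(s)‖₁ for all s ≥ s₁. -/
theorem stmt12 {n : ℕ} (hn : 3 ≤ n) (γ : Fin n → ℝ)
    (hγpos : ∀ i, 0 < γ i) (hγsum : ∑ i, γ i = 1)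
    (hγthird : ∀ i, γ i < 1 / 3)
    (β : ℝ) (hβ : IsGreatest (Set.range fun i => γ i / (1 - γ i)) β)
    (xstar : Fin n → ℝ) (hxs : xstar ∈ intSimplex n)
    (hfix : DF γ xstar = xstar)
    (huniq : ∀ y ∈ intSimplex n, DF γ y = y → y = xstar) :
    β < 1 / 2 ∧
    ∀ x : ℕ → Fin n → ℝ, x 0 ∈ punctSimplex n →
      (∀ s, x (s + 1) = DF γ (x s)) →
      ∃ ε > (0 : ℝ), 2 * β - ε < 1 ∧ ∃ s₁ : ℕ, ∀ s ≥ s₁,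
        norm1 (xstar - x (s + 1)) ≤ (2 * β - ε) * norm1 (xstar - x s) := by
  obtain ⟨⟨i₀, hi₀⟩, hub⟩ := hβ
  have hβle : ∀ i, γ i / (1 - γ i) ≤ β := fun i => hub ⟨i, rfl⟩
  have h13 := hγthird i₀
  have hp := hγpos i₀
  simp only at hi₀
  have hβ2 : β < 1 / 2 := by
    rw [← hi₀, div_lt_iff₀ (by linarith)]; linarith
  have hβ0 : 0 < β := by
    rw [← hi₀]; exact div_pos hp (by linarith)
  refine ⟨hβ2, fun x hx0 hx => ?_⟩
  obtain ⟨b, hb0, hbβ, hb⟩ :=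
    eventually_le_of_trajectory hn γ hγpos hγsum hγthird β hβ0 hβ2 hβle
  have hstar : ∀ i, xstar i ≤ b :=
    (hb (fun _ => xstar) (lt_one_of_mem_intSimplex hn hxs) fun _ => hfix.symm).exists.choose_spec
  obtain ⟨N, hN⟩ := Filter.eventually_atTop.1 (hb x (lt_one_of_mem_punctSimplex hx0) hx)
  refine ⟨2 * (β - b), by linarith, by linarith, N, fun s hs => ?_⟩
  have h := norm1_DF_sub_le γ hγpos hγsum b (by linarith) xstar (x s) hstar (hN s hs)
    (by rw [hfix]; exact hstar) (by rw [← hx]; exact hN (s + 1) (by omega))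
  rw [hfix, ← hx] at h
  rw [show 2 * β - 2 * (β - b) = 2 * b by ring]
  exact h
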